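/- Let ζ denote the Riemann zeta function and suppose ρ = β + iγ is a zero of ζ with β > 7/8 and |ρ| > 10^{12}; let δ be the unique real number with −π < δ ≤ π such that γ·log 2 = 2πn + δ for some integer n, and suppose |δ| > π/100. Let χ be a real primitive Dirichlet character modulo D with D ≡ 0 (mod 4) and D > 10^9, and set U = |ρ|·D^{1/4}·log D. Then Σ_{n ≤ U^6} (τ(n)/n^β) · | Σ_{r ≤ U^{12}/n} (−1)^r (1*χ)(r)/r^ρ | < 96 · U^{10−12β} · (log U)^2. -/

import Mathlib

open Complex

lemma aux_diff (s : ℂ) (hs : 0 < s.re) (a b : ℝ) (ha : 0 < a) (hab : a ≤ b) :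
    ‖(b : ℂ) ^ (-s) - (a : ℂ) ^ (-s)‖ ≤ ‖s‖ / s.re * (a ^ (-s.re) - b ^ (-s.re)) := by
  have hpos : ∀ t ∈ Set.Icc a b, 0 < t := fun t ht => lt_of_lt_of_le ha ht.1
  have hd : ∀ t : ℝ, 0 < t → HasDerivAt (fun t : ℝ => (t : ℂ) ^ (-s) - (a : ℂ) ^ (-s))
      (-s * (t : ℂ) ^ (-s - 1)) t := by
    intro t ht
    have h1 : HasDerivAt (fun z : ℂ => z ^ (-s)) (-s * (t : ℂ) ^ (-s - 1)) (t : ℂ) := by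
      have := (hasDerivAt_id (t : ℂ)).cpow_const (c := -s) (Or.inl (by simpa using ht))
      simpa using this
    exact (h1.comp_ofReal).sub_const _
  have hB : ∀ t : ℝ, 0 < t → HasDerivAt (fun t : ℝ => ‖s‖ / s.re * (a ^ (-s.re) - t ^ (-s.re)))
      (‖s‖ * t ^ (-s.re - 1)) t := by
    intro t ht
    have h1 := (Real.hasDerivAt_rpow_const (x := t) (p := -s.re) (Or.inl ht.ne'))
    have h2 := (h1.const_sub (a ^ (-s.re))).const_mul (‖s‖ / s.re)
    have h0 := hs.ne'
    have e : ‖s‖ * t ^ (-s.re - 1) = ‖s‖ / s.re * (-(-s.re * t ^ (-s.re - 1))) := by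
      field_simp
    rw [e]; exact h2
  have := image_norm_le_of_norm_deriv_right_le_deriv_boundary' (a := a) (b := b)
    (f := fun t : ℝ => (t : ℂ) ^ (-s) - (a : ℂ) ^ (-s))
    (f' := fun t : ℝ => -s * (t : ℂ) ^ (-s - 1))
    (B := fun t : ℝ => ‖s‖ / s.re * (a ^ (-s.re) - t ^ (-s.re)))
    (B' := fun t : ℝ => ‖s‖ * t ^ (-s.re - 1))
    (fun t ht => (hd t (hpos t ht)).continuousAt.continuousWithinAt)
    (fun t ht => (hd t (hpos t ⟨ht.1, ht.2.le⟩)).hasDerivWithinAt)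
    (by simp)
    (fun t ht => (hB t (hpos t ht)).continuousAt.continuousWithinAt)
    (fun t ht => (hB t (hpos t ⟨ht.1, ht.2.le⟩)).hasDerivWithinAt)
    (fun t ht => by
      have h0 := hpos t ⟨ht.1, ht.2.le⟩
      rw [norm_mul, norm_neg, Complex.norm_cpow_eq_rpow_re_of_pos h0]
      simp)
  exact this (Set.right_mem_Icc.2 hab)

lemma abel_id (c f : ℕ → ℂ) (k : ℕ) :
    ∑ i ∈ Finset.range k, c i * f i = (∑ i ∈ Finset.range k, c i) * f k +
      ∑ i ∈ Finset.range k, (∑ j ∈ Finset.range (i + 1), c j) * (f i - f (i + 1)) := by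
  induction k with
  | zero => simp
  | succ k ih =>
    rw [Finset.sum_range_succ, ih, Finset.sum_range_succ (n := k) (f := fun i => (∑ j ∈ Finset.range (i + 1), c j) * (f i - f (i + 1)))]
    rw [Finset.sum_range_succ (n := k) (f := c)]
    ring

lemma abel_range (c : ℕ → ℂ) (M : ℝ) (a : ℕ)
    (hM : ∀ k, ‖∑ i ∈ Finset.range k, c i‖ ≤ M) (s : ℂ) (hs : 0 < s.re) (k : ℕ) :
    ‖∑ i ∈ Finset.range k, c i * ((a + 1 + i : ℕ) : ℂ) ^ (-s)‖ ≤
      M * (1 + ‖s‖ / s.re) * ((a : ℝ) + 1) ^ (-s.re) := by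
  have hM0 : 0 ≤ M := by simpa using hM 0
  have hq : 0 ≤ ‖s‖ / s.re := by positivity
  set g : ℕ → ℝ := fun i => ((a + 1 + i : ℕ) : ℝ) ^ (-s.re) with hg
  have hg0 : ∀ i, 0 ≤ g i := fun i => by positivity
  have hf : ∀ i, ‖((a + 1 + i : ℕ) : ℂ) ^ (-s)‖ = g i := by
    intro i
    rw [Complex.norm_natCast_cpow_of_pos (by omega)]; simp [hg]
  have hdiff : ∀ i, ‖((a + 1 + i : ℕ) : ℂ) ^ (-s) - ((a + 1 + (i + 1) : ℕ) : ℂ) ^ (-s)‖ ≤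
      ‖s‖ / s.re * (g i - g (i + 1)) := by
    intro i
    rw [norm_sub_rev]
    have := aux_diff s hs ((a + 1 + i : ℕ) : ℝ) ((a + 1 + (i + 1) : ℕ) : ℝ)
      (by positivity) (by push_cast; linarith)
    simpa only [Complex.ofReal_natCast] using this
  rw [abel_id c (fun i => ((a + 1 + i : ℕ) : ℂ) ^ (-s)) k]
  have h1 : ‖(∑ i ∈ Finset.range k, c i) * ((a + 1 + k : ℕ) : ℂ) ^ (-s)‖ ≤ M * g k := by
    rw [norm_mul, hf]
    exact mul_le_mul_of_nonneg_right (hM k) (hg0 k)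
  have h2 : ‖∑ i ∈ Finset.range k, (∑ j ∈ Finset.range (i + 1), c j) *
      (((a + 1 + i : ℕ) : ℂ) ^ (-s) - ((a + 1 + (i + 1) : ℕ) : ℂ) ^ (-s))‖ ≤
      M * (‖s‖ / s.re) * (g 0 - g k) := by
    have e : M * (‖s‖ / s.re) * (g 0 - g k) =
        ∑ i ∈ Finset.range k, M * (‖s‖ / s.re * (g i - g (i + 1))) := by
      rw [← Finset.mul_sum, ← Finset.mul_sum, Finset.sum_range_sub']
      ring
    rw [e]
    refine norm_sum_le_of_le _ fun i _ => ?_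
    rw [norm_mul]
    exact mul_le_mul (hM _) (hdiff i) (norm_nonneg _) hM0
  have hgk : g k ≤ g 0 := by
    apply Real.rpow_le_rpow_of_nonpos (by positivity) (by push_cast; linarith [k.cast_nonneg (α := ℝ)]) (by linarith)
  have hg00 : g 0 = ((a : ℝ) + 1) ^ (-s.re) := by simp [hg]
  refine (norm_add_le _ _).trans ((add_le_add h1 h2).trans ?_)
  rw [← hg00]
  have := mul_le_mul_of_nonneg_left hgk hM0
  have := mul_nonneg (mul_nonneg hM0 hq) (hg0 k)
  nlinarith

lemma abel_Ioc (c : ℕ → ℂ) (M : ℝ) (a b : ℕ)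
    (hM : ∀ m, ‖∑ n ∈ Finset.Ioc a m, c n‖ ≤ M) (s : ℂ) (hs : 0 < s.re) :
    ‖∑ n ∈ Finset.Ioc a b, c n * (n : ℂ) ^ (-s)‖ ≤
      M * (1 + ‖s‖ / s.re) * ((a : ℝ) + 1) ^ (-s.re) := by
  have hI : ∀ (f : ℕ → ℂ) (m : ℕ), ∑ n ∈ Finset.Ioc a m, f n =
      ∑ i ∈ Finset.range (m - a), f (a + 1 + i) := by
    intro f m
    have : Finset.Ioc a m = Finset.Ico (a + 1) (m + 1) := by ext; simp
    rw [this, Finset.sum_Ico_eq_sum_range]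
    congr 2; omega
  rw [hI]
  refine abel_range (fun i => c (a + 1 + i)) M a ?_ s hs _
  intro k
  have := hM (a + k)
  rwa [hI, Nat.add_sub_cancel_left] at this

lemma sum_div_swap {E : Type*} [AddCommMonoid E] (F : ℕ → ℕ → E) (N : ℕ) :
    ∑ n ∈ Finset.Icc 1 N, ∑ d ∈ n.divisors, F d (n / d) =
      ∑ d ∈ Finset.Ioc 0 N, ∑ e ∈ Finset.Ioc 0 (N / d), F d e := by
  rw [Finset.sum_sigma', Finset.sum_sigma']
  refine Finset.sum_bij' (fun p _ => ⟨p.2, p.1 / p.2⟩) (fun p _ => ⟨p.1 * p.2, p.1⟩) ?_ ?_ ?_ ?_ ?_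
  · rintro ⟨n, d⟩ h
    simp only [Finset.mem_sigma, Finset.mem_Icc, Nat.mem_divisors, Finset.mem_Ioc] at h ⊢
    obtain ⟨⟨h1, h2⟩, h3, h4⟩ := h
    have hd := Nat.pos_of_dvd_of_pos h3 h1
    exact ⟨⟨hd, (Nat.le_of_dvd h1 h3).trans h2⟩, Nat.div_pos (Nat.le_of_dvd h1 h3) hd,
      Nat.div_le_div_right h2⟩
  · rintro ⟨d, e⟩ h
    simp only [Finset.mem_sigma, Finset.mem_Icc, Nat.mem_divisors, Finset.mem_Ioc] at h ⊢
    obtain ⟨⟨h1, h2⟩, h3, h4⟩ := h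
    have := Nat.mul_pos h1 h3
    refine ⟨⟨this, ?_⟩, Dvd.intro _ rfl, this.ne'⟩
    rw [mul_comm]; exact (Nat.le_div_iff_mul_le h1).1 h4
  · rintro ⟨n, d⟩ h
    simp only [Finset.mem_sigma, Finset.mem_Icc, Nat.mem_divisors] at h
    simp [Nat.mul_div_cancel' h.2.1]
  · rintro ⟨d, e⟩ h
    simp only [Finset.mem_sigma, Finset.mem_Ioc] at h
    simp [Nat.mul_div_cancel_left _ h.1.1]
  · rintro ⟨n, d⟩ h
    rfl

lemma sum_inv_le (N : ℕ) : ∑ d ∈ Finset.Ioc 0 N, (d : ℝ)⁻¹ ≤ 1 + Real.log N := by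
  have h := harmonic_le_one_add_log N
  rw [harmonic_eq_sum_Icc] at h
  push_cast at h
  exact h

lemma sum_inv_sqrt_le (N : ℕ) : ∑ d ∈ Finset.Ioc 0 N, (d : ℝ) ^ (-(1/2) : ℝ) ≤ 2 * Real.sqrt N := by
  induction N with
  | zero => simp
  | succ n ih =>
    rw [Finset.sum_Ioc_succ_top (Nat.zero_le n)]
    have h1 : (((n + 1 : ℕ)) : ℝ) ^ (-(1/2) : ℝ) = (Real.sqrt ((n + 1 : ℕ) : ℝ))⁻¹ := by
      rw [Real.rpow_neg (by positivity), Real.sqrt_eq_rpow]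
    have ha : (0:ℝ) ≤ Real.sqrt n := Real.sqrt_nonneg _
    have hb : 0 < Real.sqrt ((n + 1 : ℕ) : ℝ) := Real.sqrt_pos.2 (by positivity)
    have ha2 := Real.sq_sqrt (Nat.cast_nonneg (α := ℝ) n)
    have hb2 := Real.sq_sqrt (Nat.cast_nonneg (α := ℝ) (n + 1))
    rw [h1]
    have : (Real.sqrt ((n + 1 : ℕ) : ℝ))⁻¹ ≤ 2 * Real.sqrt ((n + 1 : ℕ) : ℝ) - 2 * Real.sqrt n := by
      rw [inv_le_iff_one_le_mul₀ hb]
      push_cast at hb2 ⊢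
      push_cast at hb
      nlinarith [sq_nonneg (Real.sqrt ((n:ℝ) + 1) - Real.sqrt n)]
    linarith

lemma sum_tau_le (N : ℕ) (hN : 1 ≤ N): ∑ n ∈ Finset.Icc 1 N, (n.divisors.card : ℝ) * (n : ℝ) ^ (-(1/2) : ℝ) ≤
    2 * Real.sqrt N * (1 + Real.log N) := by
  have h1 : ∑ n ∈ Finset.Icc 1 N, (n.divisors.card : ℝ) * (n : ℝ) ^ (-(1/2) : ℝ) =
      ∑ n ∈ Finset.Icc 1 N, ∑ d ∈ n.divisors, (d : ℝ) ^ (-(1/2) : ℝ) * ((n / d : ℕ) : ℝ) ^ (-(1/2) : ℝ) := by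
    refine Finset.sum_congr rfl fun n _ => ?_
    rw [← nsmul_eq_mul, ← Finset.sum_const]
    refine Finset.sum_congr rfl fun d hd => ?_
    rw [← Real.mul_rpow (by positivity) (by positivity), ← Nat.cast_mul,
      Nat.mul_div_cancel' (Nat.dvd_of_mem_divisors hd)]
  rw [h1, sum_div_swap (fun d e => (d : ℝ) ^ (-(1/2) : ℝ) * (e : ℝ) ^ (-(1/2) : ℝ))]
  calc _ ≤ ∑ d ∈ Finset.Ioc 0 N, 2 * Real.sqrt N * (d : ℝ)⁻¹ := by
        refine Finset.sum_le_sum fun d hd => ?_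
        have hd0 : (0:ℝ) < d := by exact_mod_cast (Finset.mem_Ioc.1 hd).1
        rw [← Finset.mul_sum]
        have h2 := sum_inv_sqrt_le (N / d)
        have h3 : Real.sqrt ((N / d : ℕ) : ℝ) ≤ Real.sqrt N / Real.sqrt d := by
          rw [← Real.sqrt_div (by positivity)]
          exact Real.sqrt_le_sqrt Nat.cast_div_le
        have h4 : (d : ℝ) ^ (-(1/2) : ℝ) = (Real.sqrt d)⁻¹ := by
          rw [Real.rpow_neg (by positivity), Real.sqrt_eq_rpow]
        have hs : 0 < Real.sqrt d := Real.sqrt_pos.2 hd0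
        rw [h4]
        calc _ ≤ (Real.sqrt d)⁻¹ * (2 * (Real.sqrt N / Real.sqrt d)) := by
              gcongr; linarith
          _ = 2 * Real.sqrt N * (Real.sqrt d ^ 2)⁻¹ := by field_simp
          _ = _ := by rw [Real.sq_sqrt hd0.le]
    _ ≤ _ := by
        rw [← Finset.mul_sum]
        gcongr
        exact sum_inv_le N

lemma sin_pi_lb (t : ℝ) (h0 : 0 ≤ t) (h1 : t ≤ 1) : 2 * t * (1 - t) ≤ Real.sin (Real.pi * t) := by
  have key : ∀ t : ℝ, 0 ≤ t → t ≤ 1 / 2 → 2 * t * (1 - t) ≤ Real.sin (Real.pi * t) := by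
    intro t h0 h1
    have hp := Real.pi_pos
    have := Real.mul_le_sin (x := Real.pi * t) (by positivity) (by nlinarith)
    have e : 2 / Real.pi * (Real.pi * t) = 2 * t := by field_simp
    nlinarith
  rcases le_total t (1 / 2) with h | h
  · exact key t h0 h
  · have := key (1 - t) (by linarith) (by linarith)
    rw [show Real.pi * (1 - t) = Real.pi - Real.pi * t by ring, Real.sin_pi_sub] at this
    linarith

lemma geom_bd (D : ℕ) [NeZero D] (j : ZMod D) (hj : j ≠ 0) (a m : ℕ) :
    ‖∑ n ∈ Finset.Ioc a m, ZMod.stdAddChar (-(j * ((n : ℕ) : ZMod D)))‖ ≤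
      (D : ℝ) / 2 * ((j.val : ℝ)⁻¹ + ((D - j.val : ℕ) : ℝ)⁻¹) := by
  have hD : (0 : ℝ) < D := by exact_mod_cast Nat.pos_of_ne_zero (NeZero.ne D)
  set v := j.val with hv
  have hvD : v < D := ZMod.val_lt j
  have hv0 : 0 < v := Nat.pos_of_ne_zero (fun h => hj ((ZMod.val_eq_zero j).1 h))
  have hv0' : (0 : ℝ) < v := by exact_mod_cast hv0
  have hvD' : (v : ℝ) < D := by exact_mod_cast hvD
  set w : ℂ := ZMod.stdAddChar (-j) with hw
  have hw1 : ‖w‖ = 1 := by rw [hw]; exact AddChar.norm_apply _ _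
  have hterm : ∀ n : ℕ, ZMod.stdAddChar (-(j * ((n : ℕ) : ZMod D))) = w ^ n := by
    intro n
    rw [hw, ← AddChar.map_nsmul_eq_pow]
    congr 1
    rw [nsmul_eq_mul]; ring
  have hnorm : ‖w - 1‖ = 2 * Real.sin (Real.pi * (v / D)) := by
    have e : w = exp (I * ((-(2 * Real.pi * v / D) : ℝ) : ℂ)) := by
      rw [hw]
      have : (-j) = (((-(v : ℤ)) : ℤ) : ZMod D) := by
        push_cast; rw [hv, ZMod.natCast_zmod_val]
      rw [this, ZMod.stdAddChar_coe]
      congr 1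
      push_cast; ring
    rw [e, Complex.norm_exp_I_mul_ofReal_sub_one]
    rw [show -(2 * Real.pi * v / D) / 2 = -(Real.pi * (v / D)) by ring, Real.sin_neg]
    rw [Real.norm_eq_abs, mul_neg, abs_neg, abs_of_nonneg]
    have := sin_pi_lb (v / D) (by positivity) ((div_le_one hD).2 hvD'.le)
    have h2 : (v : ℝ) / D ≤ 1 := (div_le_one hD).2 hvD'.le
    have h3 : 0 ≤ (v : ℝ) / D := by positivity
    nlinarith
  have hlb : 4 * (v * (D - v) / D ^ 2 : ℝ) ≤ ‖w - 1‖ := by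
    rw [hnorm]
    have := sin_pi_lb (v / D) (by positivity) ((div_le_one hD).2 hvD'.le)
    have e : (v * (D - v) / D ^ 2 : ℝ) = v / D * (1 - v / D) := by field_simp
    rw [e]; linarith
  have hpos : 0 < 4 * (v * (D - v) / D ^ 2 : ℝ) := by
    have : (0:ℝ) < D - v := by linarith
    positivity
  have hwne : 0 < ‖w - 1‖ := hpos.trans_le hlb
  simp_rw [hterm]
  have hsum : ‖(∑ n ∈ Finset.Ioc a m, w ^ n)‖ * ‖w - 1‖ ≤ 2 := by
    rw [← norm_mul]
    rcases le_total a m with h | h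
    · have : Finset.Ioc a m = Finset.Ico (a + 1) (m + 1) := by ext; simp
      rw [this, geom_sum_Ico_mul _ (by omega)]
      refine (norm_sub_le _ _).trans ?_
      simp [hw1]; norm_num
    · simp [Finset.Ioc_eq_empty_of_le h]
  calc _ ≤ 2 / ‖w - 1‖ := (le_div_iff₀ hwne).2 hsum
    _ ≤ 2 / (4 * (v * (D - v) / D ^ 2 : ℝ)) := by gcongr
    _ = _ := by
      rw [Nat.cast_sub hvD.le]
      have : (D - v : ℝ) ≠ 0 := by linarith
      field_simp
      ring

lemma gauss_sq (D : ℕ) [NeZero D] (χ : DirichletCharacter ℂ D)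
    (hinv : χ⁻¹ = χ) (hprim : χ.IsPrimitive) :
    ‖gaussSum χ ZMod.stdAddChar‖ = Real.sqrt D := by
  set g := gaussSum χ ZMod.stdAddChar with hg
  have h1 : ∀ k, ZMod.dft χ k = χ (-k) * g := by
    intro k
    rw [hprim.fourierTransform_eq_inv_mul_gaussSum, hinv]
  have h2 := congrFun (ZMod.dft_dft (N := D) (E := ℂ) χ) (-1)
  have h3 : (ZMod.dft (fun x => χ x) : ZMod D → ℂ) = fun k => χ (-k) * g := funext h1
  have h4 : ZMod.dft (ZMod.dft (fun x => χ x)) (-1) = χ (-1) * g * g := by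
    rw [h3, ZMod.dft_mul_const (fun k => χ (-k)) g, ZMod.dft_comp_neg]
    simp only [neg_neg]
    rw [← h1 1]
  have h5 : χ (-1) * g * g = D := by
    rw [← h4]
    refine h2.trans ?_
    simp
  have hχ1 : ‖χ (-1)‖ = 1 := by
    have := χ.unit_norm_eq_one (-1)
    simpa using this
  have h6 : ‖g‖ * ‖g‖ = D := by
    have := congrArg norm h5
    rw [norm_mul, norm_mul, hχ1, one_mul] at this
    simpa using this
  rw [← h6, Real.sqrt_mul_self (norm_nonneg _)]

lemma pv (D : ℕ) [NeZero D] (hD : 1 < D) (χ : DirichletCharacter ℂ D)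
    (hinv : χ⁻¹ = χ) (hprim : χ.IsPrimitive) (a m : ℕ) :
    ‖∑ n ∈ Finset.Ioc a m, χ n‖ ≤ Real.sqrt D * (1 + Real.log D) := by
  have hD0 : (0:ℝ) < D := by positivity
  set g := gaussSum χ ZMod.stdAddChar with hg
  have hgn : ‖g‖ = Real.sqrt D := gauss_sq D χ hinv hprim
  have h1 : ∀ k, ZMod.dft χ k = χ (-k) * g := by
    intro k
    rw [hprim.fourierTransform_eq_inv_mul_gaussSum, hinv]
  have h2 : ∀ n : ℕ, χ (-1) * (χ n * g) =
      ∑ j : ZMod D, ZMod.stdAddChar (-(j * ((n : ℕ) : ZMod D))) * χ j := by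
    intro n
    have := h1 n
    rw [ZMod.dft_apply] at this
    simp only [smul_eq_mul] at this
    rw [this, ← mul_assoc, ← map_mul, neg_one_mul]
  have hχ1 : ‖χ (-1)‖ = 1 := by
    have := χ.unit_norm_eq_one (-1)
    simpa using this
  have : Fact (1 < D) := ⟨hD⟩
  have h3 : ‖∑ n ∈ Finset.Ioc a m, χ n‖ * Real.sqrt D ≤ D * (1 + Real.log D) := by
    calc _ = ‖χ (-1) * ((∑ n ∈ Finset.Ioc a m, χ n) * g)‖ := by
          rw [norm_mul, norm_mul, hχ1, hgn, one_mul]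
      _ = ‖∑ j : ZMod D, (∑ n ∈ Finset.Ioc a m, ZMod.stdAddChar (-(j * ((n : ℕ) : ZMod D)))) * χ j‖ := by
          rw [Finset.sum_mul, Finset.mul_sum]
          simp_rw [h2, Finset.sum_mul]
          rw [Finset.sum_comm]
      _ ≤ ∑ j : ZMod D, (D : ℝ) / 2 * ((j.val : ℝ)⁻¹ + (if j.val = 0 then 0 else ((D - j.val : ℕ) : ℝ)⁻¹)) := by
          refine norm_sum_le_of_le _ fun j _ => ?_
          by_cases hj : j = 0
          · subst hj
            have : χ 0 = 0 := χ.map_zero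
            simp [this]
          · rw [norm_mul, if_neg (fun h => hj ((ZMod.val_eq_zero j).1 h))]
            exact (mul_le_of_le_one_right (norm_nonneg _) (χ.norm_le_one j)).trans (geom_bd D j hj a m)
      _ = ∑ v ∈ Finset.range D, (D : ℝ) / 2 * ((v : ℝ)⁻¹ + (if v = 0 then 0 else ((D - v : ℕ) : ℝ)⁻¹)) := by
          refine Finset.sum_nbij' (fun j : ZMod D => j.val) (fun v : ℕ => (v : ZMod D)) ?_ ?_ ?_ ?_ ?_
          · intro j _; simpa using ZMod.val_lt j
          · intro v _; simp
          · intro j _; simp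
          · intro v hv; exact ZMod.val_natCast_of_lt (Finset.mem_range.1 hv)
          · intro j _; rfl
      _ = (D : ℝ) / 2 * (∑ v ∈ Finset.Ioo 0 D, (v : ℝ)⁻¹ + ∑ v ∈ Finset.Ioo 0 D, ((D - v : ℕ) : ℝ)⁻¹) := by
          rw [← Finset.mul_sum, Finset.sum_add_distrib]
          congr 2
          · symm
            apply Finset.sum_subset
            · intro x hx; simp at hx ⊢; omega
            · intro x hx hx'; simp at hx hx'
              have : x = 0 := by omega
              simp [this]
          · symm
            rw [Finset.sum_congr rfl (g := fun v => if v = 0 then 0 else ((D - v : ℕ) : ℝ)⁻¹)]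
            · apply Finset.sum_subset
              · intro x hx; simp at hx ⊢; omega
              · intro x hx hx'; simp at hx hx'
                have : x = 0 := by omega
                simp [this]
            · intro x hx; simp at hx; rw [if_neg (by omega)]
      _ = (D : ℝ) * ∑ v ∈ Finset.Ioo 0 D, (v : ℝ)⁻¹ := by
          have : ∑ v ∈ Finset.Ioo 0 D, ((D - v : ℕ) : ℝ)⁻¹ = ∑ v ∈ Finset.Ioo 0 D, (v : ℝ)⁻¹ := by
            refine Finset.sum_nbij' (fun v => D - v) (fun v => D - v) ?_ ?_ ?_ ?_ ?_
            all_goals intro v hv; simp at hv ⊢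
            all_goals omega
          rw [this]; ring
      _ ≤ _ := by
          gcongr
          have h := harmonic_le_one_add_log D
          rw [harmonic_eq_sum_Icc] at h
          push_cast at h
          refine le_trans (Finset.sum_le_sum_of_subset_of_nonneg ?_ ?_) h
          · intro x hx; simp at hx ⊢; omega
          · intros; positivity
  have hs : 0 < Real.sqrt D := Real.sqrt_pos.2 hD0
  rw [← mul_le_mul_iff_left₀ hs]
  refine h3.trans (le_of_eq ?_)
  nth_rewrite 1 [← Real.mul_self_sqrt hD0.le]
  ring

lemma real_inv (D : ℕ) [NeZero D] (χ : DirichletCharacter ℂ D) (hreal : ∀ n : ℕ, (χ n).im = 0) : χ⁻¹ = χ := by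
  ext x
  rw [← MulChar.star_eq_inv, MulChar.star_apply]
  have := hreal (x : ZMod D).val
  rw [ZMod.natCast_zmod_val] at this
  exact Complex.conj_eq_iff_im.2 this

lemma cosZeta_half_of_one_lt (s : ℂ) (hs : 1 < s.re) :
    HurwitzZeta.cosZeta ((1 / 2 : ℝ) : UnitAddCircle) s = (2 * 2 ^ (-s) - 1) * riemannZeta s := by
  have h1 := HurwitzZeta.hasSum_nat_cosZeta (1 / 2) hs
  have hz : HasSum (fun n : ℕ => 1 / (n : ℂ) ^ s) (riemannZeta s) := by
    rw [zeta_eq_tsum_one_div_nat_cpow hs]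
    exact (Complex.summable_one_div_nat_cpow.2 hs).hasSum
  have hinj : Function.Injective (fun k : ℕ => 2 * k) := fun a b h => by simpa using h
  have he : HasSum (fun n : ℕ => if Even n then 1 / (n : ℂ) ^ s else 0) (2 ^ (-s) * riemannZeta s) := by
    rw [← hinj.hasSum_iff]
    · refine (hz.mul_left (2 ^ (-s))).congr_fun ?_
      intro k
      have := Complex.natCast_mul_natCast_cpow 2 k s
      simp only [Function.comp, even_two, Even.mul_right, if_true]
      push_cast at this ⊢
      rw [this, Complex.cpow_neg]
      ring
    · intro n hn
      rw [if_neg]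
      rintro ⟨k, hk⟩
      exact hn ⟨k, by simp; omega⟩
  have h2 := (he.mul_left 2).sub hz
  have h3 := h1.unique (h2.congr_fun (fun n => ?_))
  · rw [h3]; ring
  · have : Real.cos (2 * Real.pi * (1 / 2) * n) = (-1) ^ n := by
      rw [show 2 * Real.pi * (1 / 2) * n = n * Real.pi by ring, Real.cos_nat_mul_pi]
    rw [this]
    push_cast
    rcases Nat.even_or_odd n with h | h
    · simp only [h.neg_one_pow, h, if_true]; ring
    · simp only [h.neg_one_pow, Nat.not_even_iff_odd.2 h, if_false]; ring

lemma half_ne_zero' : ((1 / 2 : ℝ) : UnitAddCircle) ≠ 0 := by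
  intro h
  rw [AddCircle.coe_eq_zero_iff] at h
  obtain ⟨n, hn⟩ := h
  have : (n : ℝ) * 2 = 1 := by
    simp at hn; linarith
  have h2 : n * 2 = 1 := by exact_mod_cast this
  omega

lemma cosZeta_half (s : ℂ) (hs : s ≠ 1) :
    HurwitzZeta.cosZeta ((1 / 2 : ℝ) : UnitAddCircle) s = (2 * 2 ^ (-s) - 1) * riemannZeta s := by
  have hpre : IsPreconnected ({1}ᶜ : Set ℂ) :=
    (isConnected_compl_singleton_of_one_lt_rank (by simp) 1).isPreconnected
  have hopen : IsOpen ({1}ᶜ : Set ℂ) := isOpen_compl_singleton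
  have hf : AnalyticOnNhd ℂ (HurwitzZeta.cosZeta ((1 / 2 : ℝ) : UnitAddCircle)) ({1}ᶜ : Set ℂ) :=
    (HurwitzZeta.differentiable_cosZeta_of_ne_zero half_ne_zero').differentiableOn.analyticOnNhd hopen
  have hg : AnalyticOnNhd ℂ (fun s : ℂ => (2 * 2 ^ (-s) - 1) * riemannZeta s) ({1}ᶜ : Set ℂ) := by
    apply DifferentiableOn.analyticOnNhd _ hopen
    intro z hz
    apply DifferentiableAt.differentiableWithinAt
    apply DifferentiableAt.mul _ (differentiableAt_riemannZeta hz)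
    have : DifferentiableAt ℂ (fun s : ℂ => (2 : ℂ) ^ (-s)) z :=
      (differentiableAt_id.neg).const_cpow (Or.inl two_ne_zero)
    exact (this.const_mul 2).sub_const 1
  have := hf.eqOn_of_preconnected_of_eventuallyEq hg hpre (z₀ := 2) (by simp) ?_
  · exact this hs
  · have : {s : ℂ | 1 < s.re} ∈ nhds (2 : ℂ) :=
      (isOpen_lt continuous_const Complex.continuous_re).mem_nhds (by simp)
    filter_upwards [this] with z hz
    exact cosZeta_half_of_one_lt z hz

noncomputable def pairTerm (k : ℕ) (s : ℂ) : ℂ :=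
  ((2 * k + 2 : ℕ) : ℂ) ^ (-s) - ((2 * k + 1 : ℕ) : ℂ) ^ (-s)

lemma pairTerm_sum (s : ℂ) (K : ℕ) : ∑ k ∈ Finset.range K, pairTerm k s =
    ∑ e ∈ Finset.Ioc 0 (2 * K), (-1 : ℂ) ^ e * (e : ℂ) ^ (-s) := by
  induction K with
  | zero => simp
  | succ K ih =>
    rw [Finset.sum_range_succ, ih, show 2 * (K + 1) = 2 * K + 1 + 1 by ring,
      Finset.sum_Ioc_succ_top (by omega), Finset.sum_Ioc_succ_top (by omega), pairTerm]
    have h1 : (-1 : ℂ) ^ (2 * K + 1) = -1 := by rw [pow_succ, pow_mul]; simp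
    have h2 : (-1 : ℂ) ^ (2 * K + 1 + 1) = 1 := by rw [pow_succ, h1]; simp
    rw [h1, h2]; ring

lemma pairTerm_bd (k : ℕ) (s : ℂ) (ε R : ℝ) (hε : 0 < ε) (hs : ε < s.re) (hR : ‖s‖ < R) :
    ‖pairTerm k s‖ ≤ R * (((k + 1 : ℕ) : ℝ) ^ (ε + 1))⁻¹ := by
  have hconv : Convex ℝ (Set.Icc ((2 * k + 1 : ℕ) : ℝ) ((2 * k + 2 : ℕ) : ℝ)) := convex_Icc _ _
  have hk : (1 : ℝ) ≤ ((k + 1 : ℕ) : ℝ) := by push_cast; linarith [k.cast_nonneg (α := ℝ)]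
  have hkk : ((k + 1 : ℕ) : ℝ) ≤ ((2 * k + 1 : ℕ) : ℝ) := by push_cast; linarith [k.cast_nonneg (α := ℝ)]
  have := hconv.norm_image_sub_le_of_norm_hasDerivWithin_le
    (f := fun t : ℝ => (t : ℂ) ^ (-s)) (f' := fun t : ℝ => -s * (t : ℂ) ^ (-s - 1))
    (C := R * (((k + 1 : ℕ) : ℝ) ^ (ε + 1))⁻¹)
    (x := ((2 * k + 1 : ℕ) : ℝ)) (y := ((2 * k + 2 : ℕ) : ℝ)) ?_ ?_ ?_ ?_
  · have e : ‖((2 * k + 2 : ℕ) : ℝ) - ((2 * k + 1 : ℕ) : ℝ)‖ = 1 := by push_cast; norm_num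
    rw [e, mul_one] at this
    simpa only [Complex.ofReal_natCast, pairTerm] using this
  · intro t ht
    have ht0 : 0 < t := by linarith [ht.1]
    have h1 : HasDerivAt (fun z : ℂ => z ^ (-s)) (-s * (t : ℂ) ^ (-s - 1)) (t : ℂ) := by
      have := (hasDerivAt_id (t : ℂ)).cpow_const (c := -s) (Or.inl (by simpa using ht0))
      simpa using this
    exact h1.comp_ofReal.hasDerivWithinAt
  · intro t ht
    have ht1 : ((k + 1 : ℕ) : ℝ) ≤ t := by linarith [ht.1]
    have ht0 : 0 < t := by linarith
    rw [norm_mul, norm_neg, Complex.norm_cpow_eq_rpow_re_of_pos ht0]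
    refine mul_le_mul hR.le ?_ (by positivity) ((norm_nonneg _).trans hR.le)
    rw [← Real.rpow_neg (by positivity)]
    calc t ^ (-s - 1).re ≤ ((k + 1 : ℕ) : ℝ) ^ (-s - 1).re :=
          Real.rpow_le_rpow_of_nonpos (by positivity) ht1 (by simp; linarith)
      _ ≤ _ := Real.rpow_le_rpow_of_exponent_le hk (by simp; linarith)
  · simp
  · simp

lemma eta_tendsto (s : ℂ) (hs : 0 < s.re) (hs1 : s ≠ 1) (hz : riemannZeta s = 0) :
    Filter.Tendsto (fun K : ℕ => ∑ e ∈ Finset.Ioc 0 (2 * K), (-1 : ℂ) ^ e * (e : ℂ) ^ (-s))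
      Filter.atTop (nhds 0) := by
  set ε := min (s.re / 2) 1 with hε
  have hε0 : 0 < ε := by positivity
  set R := ‖s‖ + 3 with hR
  have hR0 : 0 < R := by positivity
  set V : Set ℂ := {z | ε < z.re} ∩ Metric.ball 0 R with hV
  have hVo : IsOpen V := (isOpen_lt continuous_const Complex.continuous_re).inter Metric.isOpen_ball
  have hVc : Convex ℝ V := (convex_halfSpace_re_gt ε).inter (convex_ball 0 R)
  have hsV : s ∈ V := by
    refine ⟨?_, ?_⟩
    · have : ε ≤ s.re / 2 := min_le_left _ _
      show ε < s.re
      linarith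
    · simp [hR]
  have h2V : (2 : ℂ) ∈ V := by
    refine ⟨?_, ?_⟩
    · have : ε ≤ 1 := min_le_right _ _
      show ε < (2 : ℂ).re
      simp; linarith
    · simp [hR]; linarith [norm_nonneg s]
  have hsummable : Summable (fun k : ℕ => R * (((k + 1 : ℕ) : ℝ) ^ (ε + 1))⁻¹) := by
    apply Summable.mul_left
    have := (summable_nat_add_iff 1).2 (Real.summable_nat_rpow_inv.2 (show 1 < ε + 1 by linarith))
    exact this
  have hbd : ∀ (k : ℕ) (z : ℂ), z ∈ V → ‖pairTerm k z‖ ≤ R * (((k + 1 : ℕ) : ℝ) ^ (ε + 1))⁻¹ := by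
    intro k z hz
    exact pairTerm_bd k z ε R hε0 hz.1 (by simpa using hz.2)
  have hdiff : DifferentiableOn ℂ (fun z => ∑' k, pairTerm k z) V := by
    refine Complex.differentiableOn_tsum_of_summable_norm hsummable ?_ hVo hbd
    intro k z _
    apply DifferentiableAt.differentiableWithinAt
    apply DifferentiableAt.sub
    · exact (differentiableAt_id.neg).const_cpow (Or.inl (Nat.cast_ne_zero.2 (by omega)))
    · exact (differentiableAt_id.neg).const_cpow (Or.inl (Nat.cast_ne_zero.2 (by omega)))
  have hlim : ∀ z ∈ V, Filter.Tendsto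
      (fun K : ℕ => ∑ e ∈ Finset.Ioc 0 (2 * K), (-1 : ℂ) ^ e * (e : ℂ) ^ (-z))
      Filter.atTop (nhds (∑' k, pairTerm k z)) := by
    intro z hz
    have : Summable (fun k => pairTerm k z) := Summable.of_norm_bounded hsummable (fun k => hbd k z hz)
    have := this.hasSum.tendsto_sum_nat
    simpa only [pairTerm_sum] using this
  have hagree : ∀ z ∈ V, 1 < z.re → ∑' k, pairTerm k z =
      HurwitzZeta.cosZeta ((1 / 2 : ℝ) : UnitAddCircle) z := by
    intro z hz hz1
    refine tendsto_nhds_unique (hlim z hz) ?_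
    have h1 := (HurwitzZeta.hasSum_nat_cosZeta (1 / 2) hz1).tendsto_sum_nat
    have h2 : Filter.Tendsto (fun K : ℕ => 2 * K + 1) Filter.atTop Filter.atTop :=
      Filter.tendsto_atTop_mono (fun K => by simp; omega) Filter.tendsto_id
    refine (h1.comp h2).congr (fun K => ?_)
    simp only [Function.comp]
    rw [Finset.sum_range_succ']
    have hz0 : z ≠ 0 := by rintro rfl; simp at hz1; linarith
    simp only [Nat.cast_zero, Complex.zero_cpow hz0, div_zero, add_zero]
    have : Finset.Ioc 0 (2 * K) = Finset.Ico 1 (2 * K + 1) := by ext; simp [Nat.succ_le_iff]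
    rw [this, Finset.sum_Ico_eq_sum_range]
    refine Finset.sum_congr rfl fun n _ => ?_
    have : Real.cos (2 * Real.pi * (1 / 2) * ((n + 1 : ℕ) : ℝ)) = (-1) ^ (n + 1) := by
      rw [show 2 * Real.pi * (1 / 2) * ((n + 1 : ℕ) : ℝ) = ((n + 1 : ℕ) : ℝ) * Real.pi by ring, Real.cos_nat_mul_pi]
    rw [this, add_comm 1 n, Complex.cpow_neg]
    push_cast
    rw [div_eq_mul_inv]
  have hf : AnalyticOnNhd ℂ (fun z => ∑' k, pairTerm k z) V := hdiff.analyticOnNhd hVo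
  have hg : AnalyticOnNhd ℂ (HurwitzZeta.cosZeta ((1 / 2 : ℝ) : UnitAddCircle)) V :=
    (HurwitzZeta.differentiable_cosZeta_of_ne_zero half_ne_zero').differentiableOn.analyticOnNhd hVo
  have heq := hf.eqOn_of_preconnected_of_eventuallyEq hg hVc.isPreconnected h2V ?_
  · have h0 : ∑' k, pairTerm k s = 0 := by
      have := heq hsV
      simp only at this
      rw [this, cosZeta_half s hs1, hz, mul_zero]
    rw [← h0]
    exact hlim s hsV
  · have : {s : ℂ | 1 < s.re} ∈ nhds (2 : ℂ) :=
      (isOpen_lt continuous_const Complex.continuous_re).mem_nhds (by simp)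
    filter_upwards [this, hVo.mem_nhds h2V] with z hz hzV
    exact hagree z hzV hz

lemma alt_sum (a m : ℕ) : ‖∑ n ∈ Finset.Ioc a m, (-1 : ℂ) ^ n‖ ≤ 1 := by
  rcases le_total a m with h | h
  · have : ∑ n ∈ Finset.Ioc a m, (-1 : ℂ) ^ n = ((-1) ^ m - (-1) ^ a) / 2 := by
      induction m, h using Nat.le_induction with
      | base => simp
      | succ m hm ih => rw [Finset.sum_Ioc_succ_top (by omega), ih, pow_succ]; ring
    rw [this, norm_div]
    have := norm_sub_le ((-1 : ℂ) ^ m) ((-1) ^ a)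
    simp at this ⊢
    linarith
  · simp [Finset.Ioc_eq_empty_of_le h]

lemma eta_bound (s : ℂ) (hs : 0 < s.re) (hs1 : s ≠ 1) (hz : riemannZeta s = 0) (N : ℕ) :
    ‖∑ e ∈ Finset.Ioc 0 N, (-1 : ℂ) ^ e * (e : ℂ) ^ (-s)‖ ≤
      (1 + ‖s‖ / s.re) * ((N : ℝ) + 1) ^ (-s.re) := by
  have h1 := (eta_tendsto s hs hs1 hz).norm.add_const ((1 + ‖s‖ / s.re) * ((N : ℝ) + 1) ^ (-s.re))
  rw [norm_zero, zero_add] at h1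
  refine ge_of_tendsto h1 ?_
  filter_upwards [Filter.eventually_ge_atTop N] with K hK
  have h2 := abel_Ioc (fun n => (-1 : ℂ) ^ n) 1 N (2 * K) (fun m => alt_sum N m) s hs
  rw [one_mul] at h2
  have h3 := Finset.sum_Ioc_consecutive (fun e : ℕ => (-1 : ℂ) ^ e * (e : ℂ) ^ (-s)) (Nat.zero_le N) (show N ≤ 2 * K by omega)
  rw [eq_sub_of_add_eq h3]
  exact (norm_sub_le _ _).trans (add_le_add_right h2 _)

lemma inner_bound (D : ℕ) (χ : DirichletCharacter ℂ D) (hχ2 : ∀ d : ℕ, Even d → χ d = 0)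
    (M : ℝ) (hM : ∀ a m : ℕ, ‖∑ n ∈ Finset.Ioc a m, χ n‖ ≤ M)
    (s : ℂ) (hs : 0 < s.re) (hs1 : s.re < 1) (hz : riemannZeta s = 0)
    (x A : ℝ) (hA : 0 < A) (hAx : A ≤ x) :
    ‖∑ r ∈ Finset.Icc 1 ⌊x⌋₊, ((-1 : ℂ) ^ r * ∑ d ∈ r.divisors, χ d) / (r : ℂ) ^ s‖ ≤
      (1 + ‖s‖ / s.re) * x ^ (-s.re) * A +
      M * (1 + ‖s‖ / s.re) * A ^ (-s.re) * ((x / A) ^ (1 - s.re) * (1 + Real.log (x / A))) := by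
  have hM0 : 0 ≤ M := by simpa using hM 0 0
  set C := 1 + ‖s‖ / s.re with hC
  have hC0 : 0 ≤ C := by positivity
  have hx : 0 < x := hA.trans_le hAx
  set N := ⌊x⌋₊ with hN
  set F : ℕ → ℕ → ℂ := fun d e => (χ d * (d : ℂ) ^ (-s)) * ((-1 : ℂ) ^ e * (e : ℂ) ^ (-s)) with hF
  have hstep : ∑ r ∈ Finset.Icc 1 N, ((-1 : ℂ) ^ r * ∑ d ∈ r.divisors, χ d) / (r : ℂ) ^ s =
      ∑ r ∈ Finset.Icc 1 N, ∑ d ∈ r.divisors, F d (r / d) := by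
    refine Finset.sum_congr rfl fun r _ => ?_
    rw [div_eq_mul_inv, ← Complex.cpow_neg, Finset.mul_sum, Finset.sum_mul]
    refine Finset.sum_congr rfl fun d hd => ?_
    have hdr := Nat.dvd_of_mem_divisors hd
    obtain ⟨e, rfl⟩ := hdr
    have hd0 : 0 < d := Nat.pos_of_mem_divisors hd
    rw [Nat.mul_div_cancel_left _ hd0, Nat.cast_mul, Complex.natCast_mul_natCast_cpow]
    simp only [hF]
    rcases Nat.even_or_odd d with h | h
    · rw [hχ2 d h]; simp
    · rw [pow_mul, h.neg_one_pow]; ring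
  rw [hstep, sum_div_swap F N]
  set a := ⌊A⌋₊ with ha
  have haN : a ≤ N := Nat.floor_le_floor hAx
  have haA : A ≤ (a : ℝ) + 1 := (Nat.lt_floor_add_one A).le
  have haA' : (a : ℝ) ≤ A := Nat.floor_le hA.le
  have hNx : (N : ℝ) ≤ x := Nat.floor_le hx.le
  rw [← Finset.sum_Ioc_consecutive _ (Nat.zero_le a) haN]
  refine (norm_add_le _ _).trans (add_le_add ?_ ?_)
  · calc _ ≤ ∑ d ∈ Finset.Ioc 0 a, C * x ^ (-s.re) := by
          refine norm_sum_le_of_le _ fun d hd => ?_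
          have hd0 : 0 < d := (Finset.mem_Ioc.1 hd).1
          have hd0' : (0 : ℝ) < d := by exact_mod_cast hd0
          simp only [hF]
          rw [← Finset.mul_sum, norm_mul, norm_mul, Complex.norm_natCast_cpow_of_pos hd0]
          have h1 := eta_bound s hs (by rintro rfl; simp at hs1) hz (N / d)
          have h2 : x / d ≤ ((N / d : ℕ) : ℝ) + 1 := by
            rw [hN, ← Nat.floor_div_natCast]
            exact (Nat.lt_floor_add_one _).le
          have h3 : (((N / d : ℕ) : ℝ) + 1) ^ (-s.re) ≤ (x / d) ^ (-s.re) :=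
            Real.rpow_le_rpow_of_nonpos (by positivity) h2 (by linarith)
          have h4 : (d : ℝ) ^ (-s.re) * (x / d) ^ (-s.re) = x ^ (-s.re) := by
            rw [← Real.mul_rpow hd0'.le (by positivity)]
            congr 1; field_simp
          calc _ ≤ (1 * (d : ℝ) ^ (-s).re) * (C * (x / d) ^ (-s.re)) := by
                gcongr
                · exact χ.norm_le_one _
                · exact h1.trans (by gcongr)
            _ = C * ((d : ℝ) ^ (-s.re) * (x / d) ^ (-s.re)) := by rw [Complex.neg_re]; ring
            _ = _ := by rw [h4]
      _ = C * x ^ (-s.re) * a := by simp; ring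
      _ ≤ _ := by gcongr
  · have hcomm : ∑ d ∈ Finset.Ioc a N, ∑ e ∈ Finset.Ioc 0 (N / d), F d e =
        ∑ e ∈ Finset.Ioc 0 (N / (a + 1)), ∑ d ∈ Finset.Ioc a (N / e), F d e := by
      apply Finset.sum_comm'
      intro d e
      simp only [Finset.mem_Ioc]
      constructor
      · rintro ⟨⟨h1, h2⟩, h3, h4⟩
        have h5 := (Nat.le_div_iff_mul_le (by omega : 0 < d)).1 h4
        refine ⟨⟨h1, (Nat.le_div_iff_mul_le h3).2 (by rwa [mul_comm])⟩, h3,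
          (Nat.le_div_iff_mul_le (by omega)).2 ((Nat.mul_le_mul_left e h1).trans h5)⟩
      · rintro ⟨⟨h1, h2⟩, h3, h4⟩
        have h5 := (Nat.le_div_iff_mul_le h3).1 h2
        refine ⟨⟨h1, h2.trans (Nat.div_le_self _ _)⟩, h3,
          (Nat.le_div_iff_mul_le (by omega)).2 (by rwa [mul_comm])⟩
    rw [hcomm]
    set y := x / A with hy
    have hy1 : 1 ≤ y := (one_le_div hA).2 hAx
    set K := N / (a + 1) with hK
    have hKy : (K : ℝ) ≤ y := by
      calc (K : ℝ) ≤ (N : ℝ) / ((a + 1 : ℕ) : ℝ) := Nat.cast_div_le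
        _ ≤ x / A := by push_cast; gcongr
    calc _ ≤ ∑ e ∈ Finset.Ioc 0 K, M * C * A ^ (-s.re) * (y ^ (1 - s.re) * (e : ℝ)⁻¹) := by
          refine norm_sum_le_of_le _ fun e he => ?_
          have he0 : 0 < e := (Finset.mem_Ioc.1 he).1
          have he0' : (0 : ℝ) < e := by exact_mod_cast he0
          have hey : (e : ℝ) ≤ y := le_trans (by exact_mod_cast (Finset.mem_Ioc.1 he).2) hKy
          simp only [hF]
          rw [← Finset.sum_mul, norm_mul, norm_mul, norm_pow, norm_neg, norm_one, one_pow, one_mul,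
            Complex.norm_natCast_cpow_of_pos he0, Complex.neg_re]
          have h1 := abel_Ioc (fun n => χ n) M a (N / e) (fun m => hM a m) s hs
          have h2 : ((a : ℝ) + 1) ^ (-s.re) ≤ A ^ (-s.re) :=
            Real.rpow_le_rpow_of_nonpos hA haA (by linarith)
          have h3 : (e : ℝ) ^ (-s.re) ≤ y ^ (1 - s.re) * (e : ℝ)⁻¹ := by
            have : (e : ℝ) ^ (-s.re) = (e : ℝ) ^ (1 - s.re) * (e : ℝ)⁻¹ := by
              rw [← Real.rpow_neg_one (e : ℝ), ← Real.rpow_add he0']; congr 1; ring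
            rw [this]
            gcongr
          have h4 : M * C * ((a : ℝ) + 1) ^ (-s.re) ≤ M * C * A ^ (-s.re) := by gcongr
          exact mul_le_mul (h1.trans h4) h3 (by positivity) (by positivity)
      _ ≤ _ := by
          rw [← Finset.mul_sum, ← Finset.mul_sum]
          gcongr
          refine (sum_inv_le K).trans ?_
          refine add_le_add_right ?_ 1
          rcases Nat.eq_zero_or_pos K with h | h
          · rw [h]; simp; exact Real.log_nonneg hy1
          · exact Real.log_le_log (by exact_mod_cast h) hKy

lemma log_ge_20 (t : ℝ) (ht : 10 ^ 9 < t) : 20 ≤ Real.log t := by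
  rw [Real.le_log_iff_exp_le (by linarith)]
  have h1 := Real.exp_one_lt_d9
  have h2 : Real.exp 20 = Real.exp 1 ^ 20 := by rw [← Real.exp_nat_mul]; norm_num
  rw [h2]
  have : Real.exp 1 ^ 20 ≤ 2.7182818286 ^ 20 := by gcongr
  refine this.trans (le_trans ?_ ht.le)
  norm_num

set_option maxHeartbeats 1000000

/-- The bound `Σ₁ < 96 U^{10-12β} (log U)²`: under the hypotheses of the main theorem
(a zero `ρ = β + iγ` of `ζ` with `β > 7/8`, `|ρ| > 10^{12}`, `γ log 2` away from multiples
of `2π`, `χ` real primitive mod `D ≡ 0 (mod 4)`, `D > 10^9`, `U = |ρ| D^{1/4} log D`),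
`Σ_{n ≤ U^6} (τ(n)/n^β) |Σ_{r ≤ U^{12}/n} (-1)^r (1*χ)(r)/r^ρ| < 96 U^{10-12β} (log U)²`. -/
theorem stmt17 (β γ : ℝ) (ρ : ℂ) (hρ : ρ = β + γ * I)
    (hzero : riemannZeta ρ = 0) (hβ : 7 / 8 < β) (hρbig : 10 ^ 12 < ‖ρ‖)
    (δ : ℝ) (hδ1 : -Real.pi < δ) (hδ2 : δ ≤ Real.pi)
    (hδ3 : ∃ n : ℤ, γ * Real.log 2 = 2 * Real.pi * n + δ)
    (hδ4 : Real.pi / 100 < |δ|)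
    (D : ℕ) (χ : DirichletCharacter ℂ D)
    (hreal : ∀ n : ℕ, (χ n).im = 0) (hprim : χ.IsPrimitive)
    (hD4 : D % 4 = 0) (hD : 10 ^ 9 < D)
    (U : ℝ) (hU : U = ‖ρ‖ * (D : ℝ) ^ ((1 : ℝ) / 4) * Real.log D) :
    ∑ n ∈ Finset.Icc 1 ⌊U ^ (6 : ℕ)⌋₊,
        ((n.divisors.card : ℝ) / (n : ℝ) ^ β) *
          ‖∑ r ∈ Finset.Icc 1 ⌊U ^ (12 : ℕ) / (n : ℝ)⌋₊,
              ((-1 : ℂ) ^ r * ∑ d ∈ r.divisors, χ d) / (r : ℂ) ^ ρ‖ <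
      96 * U ^ (10 - 12 * β) * Real.log U ^ 2 := by
  have hre : ρ.re = β := by rw [hρ]; simp
  have hβ1 : β < 1 := by
    by_contra h
    exact riemannZeta_ne_zero_of_one_le_re (by rw [hre]; linarith) hzero
  have : NeZero D := ⟨by omega⟩
  have hinv := real_inv D χ hreal
  have hχ2 : ∀ d : ℕ, Even d → χ d = 0 := by
    intro d hd
    apply χ.map_nonunit
    rw [ZMod.isUnit_iff_coprime]
    intro h
    have : 2 ∣ Nat.gcd d D := Nat.dvd_gcd hd.two_dvd (by omega)
    rw [h] at this
    omega
  have hDR : (10 : ℝ) ^ 9 < D := by exact_mod_cast hD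
  have hD0 : (0 : ℝ) < D := by positivity
  set l := Real.log D with hl
  have hl20 : 20 ≤ l := log_ge_20 D hDR
  set Q := (D : ℝ) ^ ((1 : ℝ) / 4) with hQ
  have hQ1 : 1 ≤ Q := Real.one_le_rpow (by linarith) (by norm_num)
  have hQ2 : Real.sqrt D = Q * Q := by
    rw [hQ, ← Real.rpow_add hD0, Real.sqrt_eq_rpow]; norm_num
  have hP : (10 : ℝ) ^ 12 < ‖ρ‖ := hρbig
  set P := ‖ρ‖ with hPdef
  have hQl : 1 ≤ Q * l := by nlinarith
  have hUP : P ≤ U := by rw [hU]; nlinarith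
  have hUQ : Q * l ≤ U := by rw [hU]; nlinarith
  have hU1 : 1 ≤ U := by linarith
  have hU0 : 0 < U := by linarith
  set L := Real.log U with hL
  have hL20 : 20 ≤ L := log_ge_20 U (by linarith)
  have hC : 1 + P / β ≤ 3 * P := by
    have : P / β ≤ 2 * P := by
      rw [div_le_iff₀ (by linarith)]; nlinarith
    linarith
  have hC0 : 0 ≤ 1 + P / β := by
    have : 0 < β := by linarith
    positivity
  have hM := pv D (by omega) χ hinv hprim
  -- inner bound
  have hinner : ∀ n ∈ Finset.Icc 1 ⌊U ^ (6 : ℕ)⌋₊,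
      ‖∑ r ∈ Finset.Icc 1 ⌊U ^ (12 : ℕ) / (n : ℝ)⌋₊,
              ((-1 : ℂ) ^ r * ∑ d ∈ r.divisors, χ d) / (r : ℂ) ^ ρ‖ ≤
        7 * U * L * (U ^ (12 : ℕ) / (n : ℝ)) ^ (1 / 2 - β) := by
    intro n hn
    have hn1 : (1 : ℝ) ≤ n := by exact_mod_cast (Finset.mem_Icc.1 hn).1
    have hn6 : (n : ℝ) ≤ U ^ 6 :=
      (Nat.le_floor_iff (by positivity)).1 (Finset.mem_Icc.1 hn).2
    set x := U ^ (12 : ℕ) / (n : ℝ) with hx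
    have hx6 : U ^ 6 ≤ x := by
      rw [hx, le_div_iff₀ (by linarith)]
      calc U ^ 6 * n ≤ U ^ 6 * U ^ 6 := by gcongr
        _ = U ^ 12 := by ring
    have hx12 : x ≤ U ^ 12 := div_le_self (by positivity) hn1
    have hx0 : 0 < x := lt_of_lt_of_le (by positivity) hx6
    have hx1 : 1 ≤ x := (one_le_pow₀ hU1).trans hx6
    set q := Real.sqrt x with hq
    have hqq : q * q = x := Real.mul_self_sqrt hx0.le
    have hq0 : 0 < q := Real.sqrt_pos.2 hx0
    have hq1 : 1 ≤ q := Real.one_le_sqrt.2 hx1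
    have hUq : U ≤ q := by
      apply Real.le_sqrt_of_sq_le
      exact (pow_le_pow_right₀ hU1 (by norm_num)).trans hx6
    set A := q * (Q * l) with hA
    have hA1 : 1 ≤ A := one_le_mul_of_one_le_of_one_le hq1 hQl
    have hA0 : 0 < A := by linarith
    have hAx : A ≤ x := by
      rw [← hqq, hA]
      gcongr
      exact hUQ.trans hUq
    have h := inner_bound D χ hχ2 _ hM ρ (by rw [hre]; linarith) (by rw [hre]; exact hβ1) hzero x A hA0 hAx
    rw [hre] at h
    refine h.trans ?_
    have hlog : Real.log (x / A) ≤ 12 * L := by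
      calc Real.log (x / A) ≤ Real.log (U ^ 12) := by
            apply Real.log_le_log (by positivity)
            exact (div_le_self hx0.le hA1).trans hx12
        _ = 12 * L := by rw [Real.log_pow, hL]; norm_num
    set X := x ^ (1 / 2 - β) with hX
    have hX0 : 0 < X := by positivity
    have e1 : x ^ (-β) * A = X * (Q * l) := by
      rw [hA, hX, show (1 / 2 - β) = -β + 1 / 2 by ring, Real.rpow_add hx0, ← Real.sqrt_eq_rpow, ← hq]
      ring
    have e2 : A ^ (-β) * (x / A) ^ (1 - β) = X / (Q * l) := by
      rw [Real.div_rpow hx0.le hA0.le, show (1 - β) = 1 + -β by ring, Real.rpow_add hA0, Real.rpow_one,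
        show 1 + -β = (1 / 2 - β) + 1 / 2 by ring, Real.rpow_add hx0, ← Real.sqrt_eq_rpow, ← hq, ← hX, hA]
      have : (q * (Q * l)) ^ (-β) ≠ 0 := by positivity
      field_simp
    rw [hQ2]
    calc (1 + P / β) * x ^ (-β) * A + Q * Q * (1 + l) * (1 + P / β) * A ^ (-β) *
          ((x / A) ^ (1 - β) * (1 + Real.log (x / A)))
        = (1 + P / β) * ((x ^ (-β) * A) + Q * Q * (1 + l) * (A ^ (-β) * (x / A) ^ (1 - β)) *
            (1 + Real.log (x / A))) := by ring
      _ = (1 + P / β) * (Q * X) * (l + (1 + l) / l * (1 + Real.log (x / A))) := by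
          rw [e1, e2]
          have : l ≠ 0 := by linarith
          have : Q ≠ 0 := by linarith
          field_simp
      _ ≤ (3 * P) * (Q * X) * (l + 2 * (1 + 12 * L)) := by
          have h1 : (1 + l) / l ≤ 2 := by rw [div_le_iff₀ (by linarith)]; linarith
          have h2 : 0 ≤ Real.log (x / A) := Real.log_nonneg ((one_le_div hA0).2 hAx)
          gcongr
      _ ≤ (3 * P) * (Q * X) * (7 / 3 * (l * L)) := by
          gcongr
          nlinarith
      _ = _ := by rw [hU]; ring
  -- outer bound
  set N := ⌊U ^ (6 : ℕ)⌋₊ with hN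
  have hN1 : 1 ≤ N := Nat.le_floor (by simpa using one_le_pow₀ hU1)
  have hNU : (N : ℝ) ≤ U ^ 6 := Nat.floor_le (by positivity)
  have hsq : Real.sqrt N ≤ U ^ 3 := by
    rw [Real.sqrt_le_left (by positivity)]
    calc (N : ℝ) ≤ U ^ 6 := hNU
      _ = (U ^ 3) ^ 2 := by ring
  have hlogN : Real.log N ≤ 6 * L := by
    calc Real.log N ≤ Real.log (U ^ 6) := Real.log_le_log (by exact_mod_cast hN1) hNU
      _ = 6 * L := by rw [Real.log_pow, hL]; norm_num
  calc _ ≤ ∑ n ∈ Finset.Icc 1 N, 7 * U * L * U ^ (6 - 12 * β) *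
          ((n.divisors.card : ℝ) * (n : ℝ) ^ (-(1/2) : ℝ)) := by
        refine Finset.sum_le_sum fun n hn => ?_
        have hn0 : (0 : ℝ) < n := by exact_mod_cast (Finset.mem_Icc.1 hn).1
        have hp : 0 ≤ (n.divisors.card : ℝ) / (n : ℝ) ^ β :=
          div_nonneg (Nat.cast_nonneg _) (Real.rpow_nonneg hn0.le _)
        have hi := mul_le_mul_of_nonneg_left (hinner n hn) hp
        refine hi.trans (le_of_eq ?_)
        have e1 : (U ^ (12 : ℕ) / (n : ℝ)) ^ (1 / 2 - β) = U ^ (6 - 12 * β) * ((n : ℝ) ^ β * (n : ℝ) ^ (-(1/2) : ℝ)) := by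
          rw [Real.div_rpow (by positivity) hn0.le, ← Real.rpow_natCast, ← Real.rpow_mul hU0.le,
            div_eq_mul_inv, ← Real.rpow_neg hn0.le, ← Real.rpow_add hn0]
          congr 2
          · push_cast; ring
          · ring
        rw [e1]
        have : (n : ℝ) ^ β ≠ 0 := by positivity
        field_simp
    _ ≤ 7 * U * L * U ^ (6 - 12 * β) * (2 * U ^ 3 * (1 + 6 * L)) := by
        rw [← Finset.mul_sum]
        have h0 : 0 ≤ Real.log N := Real.log_nonneg (by exact_mod_cast hN1)
        gcongr
        refine (sum_tau_le N hN1).trans ?_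
        gcongr
    _ = 14 * U ^ (10 - 12 * β) * (L * (1 + 6 * L)) := by
        have : U ^ (10 - 12 * β) = U ^ (6 - 12 * β) * U ^ 4 := by
          rw [← Real.rpow_natCast, ← Real.rpow_add hU0]; congr 1; push_cast; ring
        rw [this]; ring
    _ < _ := by
        have : 0 < U ^ (10 - 12 * β) := by positivity
        have h2 : 14 * (L * (1 + 6 * L)) < 96 * L ^ 2 := by nlinarith
        nlinarith
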